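/- Let α, β ≥ −1/2 and let P̃_n^{(α,β)} denote the Jacobi polynomial of degree n normalized in L²([−1,1], (1−t)^α(1+t)^β). Then there is a constant c = c(α,β) such that for all n ≥ 1 and x ∈ [−1,1]: |P̃_n^{(α,β)}(x)| ≤ c · (1−x+n^{−2})^{−(α+1/2)/2} · (1+x+n^{−2})^{−(β+1/2)/2}. -/

import Mathlib

open Real Set MeasureTheory

namespace Jac
open Polynomial

noncomputable def wt (α β t : ℝ) : ℝ := (1 - t) ^ α * (1 + t) ^ β

lemma wt_int (α β : ℝ) (hα : -(1/2 : ℝ) ≤ α) (hβ : -(1/2 : ℝ) ≤ β) :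
    IntervalIntegrable (wt α β) volume (-1) 1 := by
  have h1 : IntervalIntegrable (fun t : ℝ => (1 - t) ^ α) volume 0 1 := by
    have := (intervalIntegral.intervalIntegrable_rpow' (a := 0) (b := 1) (r := α) (by linarith)).comp_sub_left 1
    simpa using this.symm
  have h2 : IntervalIntegrable (fun t : ℝ => (1 + t) ^ β) volume (-1) 0 := by
    have := (intervalIntegral.intervalIntegrable_rpow' (a := 0) (b := 1) (r := β) (by linarith)).comp_add_left 1
    simpa using this
  have h3 : IntervalIntegrable (wt α β) volume 0 1 := by
    apply h1.mul_continuousOn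
    rw [uIcc_of_le (by norm_num)]
    apply ContinuousOn.rpow_const (by fun_prop)
    intro x hx; left; have := hx.1; positivity
  have h4 : IntervalIntegrable (wt α β) volume (-1) 0 := by
    apply h2.continuousOn_mul
    rw [uIcc_of_le (by norm_num)]
    apply ContinuousOn.rpow_const (by fun_prop)
    intro x hx; left; have := hx.2; linarith
  exact h4.trans h3

lemma poly_int (α β : ℝ) (hα : -(1/2 : ℝ) ≤ α) (hβ : -(1/2 : ℝ) ≤ β) (Q : ℝ[X]) :
    IntervalIntegrable (fun t => Q.eval t * wt α β t) volume (-1) 1 :=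
  (wt_int α β hα hβ).continuousOn_mul Q.continuous.continuousOn

noncomputable def Phi (α β : ℝ) (Q : ℝ[X]) : ℝ := ∫ t in (-1 : ℝ)..1, Q.eval t * wt α β t

lemma Phi_add (α β : ℝ) (hα : -(1/2 : ℝ) ≤ α) (hβ : -(1/2 : ℝ) ≤ β) (Q R : ℝ[X]) :
    Phi α β (Q + R) = Phi α β Q + Phi α β R := by
  unfold Phi
  rw [← intervalIntegral.integral_add (poly_int α β hα hβ Q) (poly_int α β hα hβ R)]
  congr 1; ext t; simp; ring

lemma Phi_C (α β : ℝ) (c : ℝ) (Q : ℝ[X]) :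
    Phi α β (C c * Q) = c * Phi α β Q := by
  unfold Phi
  rw [← intervalIntegral.integral_const_mul]
  congr 1; ext t; simp; ring

lemma Phi_sum (α β : ℝ) (hα : -(1/2 : ℝ) ≤ α) (hβ : -(1/2 : ℝ) ≤ β) (m : ℕ) (f : ℕ → ℝ[X]) :
    Phi α β (∑ k ∈ Finset.range m, f k) = ∑ k ∈ Finset.range m, Phi α β (f k) := by
  induction m with
  | zero => simp [Phi]
  | succ m ih => rw [Finset.sum_range_succ, Finset.sum_range_succ, Phi_add α β hα hβ, ih]

noncomputable def LL (α β : ℝ) (f : ℝ[X]) : ℝ[X] :=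
  (1 - X ^ 2) * derivative (derivative f) + (C (β - α) - C (α + β + 2) * X) * derivative f

lemma LL_sym (α β : ℝ) (hα : -(1/2 : ℝ) ≤ α) (hβ : -(1/2 : ℝ) ≤ β) (f g : ℝ[X]) :
    Phi α β (LL α β f * g) + Phi α β ((1 - X ^ 2) * derivative f * derivative g) = 0 := by
  rw [← Phi_add α β hα hβ]
  set Q := LL α β f * g + (1 - X ^ 2) * derivative f * derivative g with hQ
  have := intervalIntegral.integral_eq_sub_of_hasDerivAt_of_le (a := -1) (b := 1)
    (f := fun t => (1 - t) ^ (α + 1) * (1 + t) ^ (β + 1) * ((derivative f).eval t * g.eval t))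
    (f' := fun t => Q.eval t * wt α β t) (by norm_num) ?_ ?_ (poly_int α β hα hβ Q)
  · unfold Phi
    rw [this]
    have : α + 1 ≠ 0 := by linarith
    have : β + 1 ≠ 0 := by linarith
    simp [Real.zero_rpow, *]
  · apply ContinuousOn.mul
    · apply ContinuousOn.mul
      · apply ContinuousOn.rpow_const (by fun_prop)
        intro x hx; right; linarith
      · apply ContinuousOn.rpow_const (by fun_prop)
        intro x hx; right; linarith
    · exact ((derivative f).continuous.mul g.continuous).continuousOn
  · intro x hx
    have h1 : 0 < 1 - x := by linarith [hx.2]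
    have h2 : 0 < 1 + x := by linarith [hx.1]
    have d1 : HasDerivAt (fun t : ℝ => (1 - t) ^ (α + 1)) ((-1) * (α + 1) * (1 - x) ^ (α + 1 - 1)) x :=
      ((hasDerivAt_id x).const_sub 1).rpow_const (Or.inl h1.ne')
    have d2 : HasDerivAt (fun t : ℝ => (1 + t) ^ (β + 1)) (1 * (β + 1) * (1 + x) ^ (β + 1 - 1)) x :=
      ((hasDerivAt_id x).const_add 1).rpow_const (Or.inl h2.ne')
    have d3 := ((derivative f).hasDerivAt x).mul (g.hasDerivAt x)
    refine ((d1.mul d2).mul d3).congr_deriv ?_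
    simp only [hQ, LL, wt, Pi.mul_apply]
    rw [Real.rpow_add h1, Real.rpow_add h2]
    simp
    ring

lemma span (P : ℕ → ℝ[X]) (hd : ∀ n, (P n).natDegree = n) (h0 : ∀ n, P n ≠ 0) (m : ℕ) :
    ∀ Q : ℝ[X], Q.degree < m → ∃ c : ℕ → ℝ, Q = ∑ k ∈ Finset.range m, C (c k) * P k := by
  induction m with
  | zero => 
    intro Q hQ
    refine ⟨0, ?_⟩
    have : Q = 0 := by simpa using hQ
    simp [this]
  | succ m ih =>
    intro Q hQ
    have hl : (P m).coeff m ≠ 0 := by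
      have := leadingCoeff_ne_zero.mpr (h0 m)
      rwa [leadingCoeff, hd] at this
    obtain ⟨c, hc⟩ := ih (Q - C (Q.coeff m / (P m).coeff m) * P m) (by
      rw [degree_lt_iff_coeff_zero] at hQ ⊢
      intro k hk
      rcases hk.eq_or_lt with rfl | hk
      · simp; field_simp; simp
      · have : (P m).coeff k = 0 := coeff_eq_zero_of_natDegree_lt (by rw [hd]; exact hk)
        simp [this]
        exact hQ k hk)
    refine ⟨Function.update c m (Q.coeff m / (P m).coeff m), ?_⟩
    rw [Finset.sum_range_succ]
    simp only [Function.update_self]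
    rw [← sub_eq_iff_eq_add, hc]
    apply Finset.sum_congr rfl
    intro k hk
    rw [Function.update_of_ne (Finset.mem_range.mp hk).ne]

lemma LL_coeff (α β : ℝ) (f : ℝ[X]) (n : ℕ) (hf : f.natDegree ≤ n) (k : ℕ) (hk : n ≤ k) :
    (LL α β f).coeff k = - (k * (k + α + β + 1)) * f.coeff k := by
  have e1 : f.coeff (k + 1) = 0 := coeff_eq_zero_of_natDegree_lt (by omega)
  have e2 : f.coeff (k + 2) = 0 := coeff_eq_zero_of_natDegree_lt (by omega)
  have e : LL α β f = derivative (derivative f) - derivative (derivative f) * X ^ 2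
    + C (β - α) * derivative f - C (α + β + 2) * (derivative f * X) := by unfold LL; ring
  have e3 : (k : ℝ) * (k + α + β + 1) = k * (k - 1 + (α + β + 2)) := by ring
  rw [e, e3]
  generalize β - α = c1
  generalize α + β + 2 = c2
  clear e e3
  match k with
  | 0 =>
    simp [coeff_derivative, -map_add, -map_sub] at *
    simp [e1, e2]
  | 1 =>
    simp [coeff_derivative, coeff_mul_X_pow', coeff_mul_X, -map_add, -map_sub] at *
    simp [e1, e2]
  | (j+2) =>
    have e1' : f.coeff (j + 2 + 1) = 0 := e1
    have e2' : f.coeff (j + 2 + 1 + 1) = 0 := e2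
    simp only [coeff_add, coeff_sub, coeff_C_mul, coeff_mul_X, coeff_mul_X_pow, coeff_derivative, e1', e2']
    push_cast
    ring

/-- the Jacobi ODE and the Dirichlet form identity -/
lemma ode (α β : ℝ) (hα : -(1/2 : ℝ) ≤ α) (hβ : -(1/2 : ℝ) ≤ β) (P : ℕ → ℝ[X])
    (hd : ∀ n, (P n).natDegree = n)
    (ho : ∀ n m, Phi α β (P n * P m) = if n = m then 1 else 0) (n : ℕ) :
    LL α β (P n) + C (n * (n + α + β + 1) : ℝ) * P n = 0 := by
  have h0 : ∀ n, P n ≠ 0 := by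
    intro n h
    have := ho n n
    simp [h, Phi] at this
  have orth : ∀ n : ℕ, ∀ Q : ℝ[X], Q.degree < n → Phi α β (P n * Q) = 0 := by
    intro n Q hQ
    obtain ⟨c, rfl⟩ := span P hd h0 n Q hQ
    rw [Finset.mul_sum, Phi_sum α β hα hβ]
    apply Finset.sum_eq_zero
    intro k hk
    rw [show P n * (C (c k) * P k) = C (c k) * (P n * P k) by ring, Phi_C, ho, if_neg, mul_zero]
    have := Finset.mem_range.mp hk; omega
  set S := LL α β (P n) + C (n * (n + α + β + 1) : ℝ) * P n with hS
  have hdeg : S.degree < n := by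
    rw [degree_lt_iff_coeff_zero]
    intro k hk
    rw [hS, coeff_add, LL_coeff α β (P n) n (hd n).le k hk, coeff_C_mul]
    rcases hk.eq_or_lt with rfl | hk
    · ring
    · have : (P n).coeff k = 0 := coeff_eq_zero_of_natDegree_lt (by rw [hd]; exact hk)
      simp [this]
  have hSk : ∀ k < n, Phi α β (S * P k) = 0 := by
    intro k hk
    have a1 := LL_sym α β hα hβ (P n) (P k)
    have a2 := LL_sym α β hα hβ (P k) (P n)
    rw [show (1 - X ^ 2) * derivative (P k) * derivative (P n)
      = (1 - X ^ 2) * derivative (P n) * derivative (P k) by ring] at a2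
    have a3 : Phi α β (P n * LL α β (P k)) = 0 := by
      apply orth
      rw [degree_lt_iff_coeff_zero]
      intro j hj
      rw [LL_coeff α β (P k) k (hd k).le j (by omega),
        coeff_eq_zero_of_natDegree_lt (by rw [hd]; omega), mul_zero]
    rw [mul_comm] at a3
    rw [hS, add_mul, Phi_add α β hα hβ, mul_assoc, Phi_C, ho, if_neg (by omega)]
    linarith
  obtain ⟨c, hc⟩ := span P hd h0 n S hdeg
  rw [hc]
  apply Finset.sum_eq_zero
  intro k hk
  have := hSk k (Finset.mem_range.mp hk)
  rw [hc, Finset.sum_mul, Phi_sum α β hα hβ, Finset.sum_eq_single k] at this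
  · rw [mul_assoc, Phi_C, ho, if_pos rfl, mul_one] at this
    simp [this]
  · intro b _ hb
    rw [mul_assoc, Phi_C, ho, if_neg hb, mul_zero]
  · intro h; exact absurd hk h

/-- a good point in the middle -/
lemma mid (α β : ℝ) (hα : -(1/2 : ℝ) ≤ α) (hβ : -(1/2 : ℝ) ≤ β) (y : ℝ[X]) (lam : ℝ)
    (hy : LL α β y + C lam * y = 0) (h1 : Phi α β (y * y) = 1) :
    ∃ x ∈ Icc (-(1/2) : ℝ) (1/2), ((1 - x^2) * (derivative y).eval x ^ 2 + lam * y.eval x ^ 2)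
      * wt α β x ≤ 2 * lam := by
  by_contra! hcon
  have hs := LL_sym α β hα hβ y y
  have e : LL α β y = C (-lam) * y := by
    rw [eq_neg_of_add_eq_zero_left hy]; simp
  rw [e, mul_assoc, Phi_C, h1] at hs
  have hlam : 0 ≤ lam := by
    have : 0 ≤ Phi α β ((1 - X ^ 2) * derivative y * derivative y) := by
      apply intervalIntegral.integral_nonneg (by norm_num)
      intro x hx
      have h1 : 0 ≤ 1 - x := by linarith [hx.2]
      have h2 : 0 ≤ 1 + x := by linarith [hx.1]
      have h3 : 0 ≤ 1 - x^2 := by nlinarith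
      have : 0 ≤ wt α β x := by unfold wt; positivity
      simp only [eval_mul, eval_sub, eval_pow, eval_X, eval_one]
      rw [mul_assoc (1 - x^2)]
      have := mul_self_nonneg (eval x (derivative y))
      positivity
    linarith
  set Q : ℝ[X] := (1 - X ^ 2) * derivative y * derivative y + C lam * (y * y) with hQ
  have hQ2 : Phi α β Q = 2 * lam := by
    rw [hQ, Phi_add α β hα hβ, Phi_C, h1]; linarith
  have hpos : ∀ x ∈ Icc (-1:ℝ) 1, 0 ≤ Q.eval x * wt α β x := by
    intro x hx
    have h1 : 0 ≤ 1 - x := by linarith [hx.2]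
    have h2 : 0 ≤ 1 + x := by linarith [hx.1]
    have h3 : 0 ≤ 1 - x^2 := by nlinarith
    have : 0 ≤ wt α β x := by unfold wt; positivity
    simp only [hQ, eval_add, eval_C, eval_mul, eval_sub, eval_pow, eval_X, eval_one]
    rw [mul_assoc (1 - x^2)]
    have := mul_self_nonneg (eval x (derivative y))
    have := mul_self_nonneg (eval x y)
    positivity
  have hI := poly_int α β hα hβ Q
  have hI2 : IntervalIntegrable (fun t => Q.eval t * wt α β t) volume (-(1/2)) (1/2) :=
    hI.mono_set (by rw [uIcc_of_le (by norm_num), uIcc_of_le (by norm_num)]; exact Icc_subset_Icc (by norm_num) (by norm_num))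
  have hle : ∫ t in (-(1/2):ℝ)..(1/2), Q.eval t * wt α β t ≤ Phi α β Q := by
    apply intervalIntegral.integral_mono_interval (by norm_num) (by norm_num) (by norm_num) _ hI
    refine (ae_restrict_iff' measurableSet_Ioc).mpr (Filter.Eventually.of_forall ?_)
    intro x hx
    exact hpos x (Ioc_subset_Icc_self hx)
  have hlt : ∫ t in (-(1/2):ℝ)..(1/2), (2 * lam) < ∫ t in (-(1/2):ℝ)..(1/2), Q.eval t * wt α β t := by
    apply intervalIntegral.integral_lt_integral_of_continuousOn_of_le_of_exists_lt (by norm_num)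
    · fun_prop
    · apply Q.continuous.continuousOn.mul
      unfold wt
      apply ContinuousOn.mul
      · apply ContinuousOn.rpow_const (by fun_prop)
        intro x hx; left; have := hx.2; linarith
      · apply ContinuousOn.rpow_const (by fun_prop)
        intro x hx; left; have := hx.1; linarith
    · intro x hx
      have := hcon x (Ioc_subset_Icc_self hx)
      simp only [hQ, eval_add, eval_C, eval_mul, eval_sub, eval_pow, eval_X, eval_one]
      nlinarith
    · refine ⟨0, by norm_num, ?_⟩
      have := hcon 0 (by norm_num)
      simp only [hQ, eval_add, eval_C, eval_mul, eval_sub, eval_pow, eval_X, eval_one]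
      nlinarith
  rw [intervalIntegral.integral_const] at hlt
  norm_num at hlt
  norm_num at hle
  linarith

lemma LL_eval (α β lam : ℝ) (y : ℝ[X]) (hy : LL α β y + C lam * y = 0) (x : ℝ) :
    (1 - x ^ 2) * (derivative (derivative y)).eval x
      + (β - α - (α + β + 2) * x) * (derivative y).eval x + lam * y.eval x = 0 := by
  have := congrArg (eval x) hy
  simpa [LL] using this

lemma edge_aux (α β lam M x1 xs : ℝ) (hα : -(1/2 : ℝ) ≤ α) (hβ : -(1/2 : ℝ) ≤ β)
    (hlam : 0 ≤ lam) (g : ℝ[X]) (hg : LL α β g + C lam * g = 0)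
    (hx1 : -1 ≤ x1) (h2 : (α + β + 2) * (1 - x1) ≤ α + 1)
    (hM : ∀ x ∈ Icc x1 1, |g.eval x| ≤ M) (hxs : xs ∈ Icc x1 1)
    (hmax : IsMaxOn (fun x => (derivative g).eval x) (Icc x1 1) xs)
    (hpos : 0 ≤ (derivative g).eval xs) :
    (α + 1) * (derivative g).eval xs ≤ lam * M := by
  have hd := ((derivative g).hasDerivAt xs).hasDerivWithinAt (s := Icc x1 1)
  have hc := hmax.localize.hasFDerivWithinAt_nonpos hd.hasFDerivWithinAt
    (y := 1 - xs) (sub_mem_posTangentConeAt_of_segment_subset (by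
      apply (convex_Icc x1 1).segment_subset hxs
      exact ⟨by linarith [hxs.1, hxs.2], le_refl _⟩))
  simp at hc
  have e := LL_eval α β lam g hg xs
  have h3 := (abs_le.mp (hM xs hxs)).2
  have h4 : lam * g.eval xs ≤ lam * M := by gcongr
  have h5 : (α + β + 2) * (1 - xs) ≤ α + 1 := by
    refine le_trans ?_ h2
    apply mul_le_mul_of_nonneg_left _ (by linarith)
    linarith [hxs.1]
  have h6 : (1 - xs ^ 2) * (derivative (derivative g)).eval xs ≤ 0 := by
    have : 0 ≤ 1 + xs := by linarith [hxs.1]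
    nlinarith
  nlinarith

lemma edge (α β lam x1 : ℝ) (hα : -(1/2 : ℝ) ≤ α) (hβ : -(1/2 : ℝ) ≤ β)
    (hlam : 0 ≤ lam) (y : ℝ[X]) (hy : LL α β y + C lam * y = 0)
    (hx1 : -1 ≤ x1) (hx1' : x1 ≤ 1) (h2 : (α + β + 2) * (1 - x1) ≤ α + 1)
    (h3 : lam * (1 - x1) ≤ (α + 1) / 2) :
    ∀ x ∈ Icc x1 1, |y.eval x| ≤ 2 * |y.eval x1| := by
  have hne : (Icc x1 1).Nonempty := ⟨x1, le_refl _, hx1'⟩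
  obtain ⟨xm, hxm, hm⟩ := isCompact_Icc.exists_isMaxOn hne
    (f := fun x => |y.eval x|) (y.continuous.abs.continuousOn)
  obtain ⟨xs, hxs, hs⟩ := isCompact_Icc.exists_isMaxOn hne
    (f := fun x => |(derivative y).eval x|) ((derivative y).continuous.abs.continuousOn)
  have hm' : ∀ x ∈ Icc x1 1, |y.eval x| ≤ |y.eval xm| := fun x hx => hm hx
  have hs' : ∀ x ∈ Icc x1 1, |(derivative y).eval x| ≤ |(derivative y).eval xs| := fun x hx => hs hx
  have hD : (α + 1) * |(derivative y).eval xs| ≤ lam * |y.eval xm| := by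
    rcases le_total 0 ((derivative y).eval xs) with h | h
    · rw [abs_of_nonneg h]
      apply edge_aux α β lam _ x1 xs hα hβ hlam y hy hx1 h2 hm' hxs _ h
      intro x hx
      have := hs' x hx
      rw [abs_of_nonneg h] at this
      exact (le_abs_self _).trans this
    · rw [abs_of_nonpos h]
      have := edge_aux α β lam |y.eval xm| x1 xs hα hβ hlam (-y) (by
        have : LL α β (-y) + C lam * (-y) = -(LL α β y + C lam * y) := by
          simp only [LL, derivative_neg]; ring
        rw [this, hy, neg_zero]) hx1 h2 (by simpa using hm') hxs (by
          intro x hx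
          have := hs' x hx
          rw [abs_of_nonpos h] at this
          simp only [derivative_neg, eval_neg, mem_ofPred_eq]
          exact (neg_le_abs _).trans this) (by simpa using h)
      simpa using this
  have hmv := (convex_Icc x1 1).norm_image_sub_le_of_norm_hasDerivWithin_le
    (f := fun x => y.eval x) (f' := fun x => (derivative y).eval x)
    (C := |(derivative y).eval xs|)
    (fun x _ => (y.hasDerivAt x).hasDerivWithinAt) (fun x hx => hs' x hx)
    (show x1 ∈ Icc x1 1 from ⟨le_refl _, hx1'⟩) hxm
  simp only [Real.norm_eq_abs] at hmv
  have h5 : |xm - x1| ≤ 1 - x1 := by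
    rw [abs_of_nonneg (by linarith [hxm.1])]; linarith [hxm.2]
  have h6 : |y.eval xm| ≤ |y.eval x1| + |y.eval xm - y.eval x1| := by
    have := abs_add_le (y.eval x1) (y.eval xm - y.eval x1)
    simpa using this
  have h7 : |(derivative y).eval xs| * |xm - x1| ≤ |(derivative y).eval xs| * (1 - x1) := by gcongr
  have h8 : (α + 1) * (|(derivative y).eval xs| * (1 - x1)) ≤ (α + 1) * (|y.eval xm| / 2) := by
    calc _ = ((α + 1) * |(derivative y).eval xs|) * (1 - x1) := by ring
      _ ≤ (lam * |y.eval xm|) * (1 - x1) := by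
        apply mul_le_mul_of_nonneg_right hD; linarith
      _ = (lam * (1 - x1)) * |y.eval xm| := by ring
      _ ≤ ((α + 1) / 2) * |y.eval xm| := by gcongr
      _ = _ := by ring
  have h9 := le_of_mul_le_mul_left h8 (by linarith)
  intro x hx
  have := hm' x hx
  linarith

noncomputable def RR (α β x : ℝ) : ℝ := (1 - x) ^ (α + 1/2) * (1 + x) ^ (β + 1/2)
noncomputable def rho (α β x : ℝ) : ℝ := -((α + 1/2) / 2) / (1 - x) + ((β + 1/2) / 2) / (1 + x)
noncomputable def FF (α β N : ℝ) (y : ℝ[X]) (x : ℝ) : ℝ :=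
  RR α β x * ((1 - x ^ 2) * ((derivative y).eval x + rho α β x * y.eval x) ^ 2
    + N ^ 2 * y.eval x ^ 2)
noncomputable def DD (α β x : ℝ) : ℝ :=
  -((1/4 - α^2) / (2 * (1 - x))) - (1/4 - β^2) / (2 * (1 + x))

lemma RR_pos (α β x : ℝ) (hx : x ∈ Ioo (-1 : ℝ) 1) : 0 < RR α β x := by
  have h1 : 0 < 1 - x := by linarith [hx.2]
  have h2 : 0 < 1 + x := by linarith [hx.1]
  unfold RR; positivity

set_option maxRecDepth 10000 in
lemma FF_deriv (α β n : ℝ) (y : ℝ[X])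
    (hy : LL α β y + C (n * (n + α + β + 1)) * y = 0) (x : ℝ) (hx : x ∈ Ioo (-1 : ℝ) 1) :
    HasDerivAt (FF α β (n + (α + β + 1) / 2) y)
      (RR α β x * (2 * ((derivative y).eval x + rho α β x * y.eval x) * y.eval x * DD α β x)) x := by
  have h1 : 0 < 1 - x := by linarith [hx.2]
  have h2 : 0 < 1 + x := by linarith [hx.1]
  have d1 : HasDerivAt (fun t : ℝ => (1 - t) ^ (α + 1/2)) ((-1) * (α + 1/2) * (1 - x) ^ (α + 1/2 - 1)) x :=
    ((hasDerivAt_id x).const_sub 1).rpow_const (Or.inl h1.ne')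
  have d2 : HasDerivAt (fun t : ℝ => (1 + t) ^ (β + 1/2)) (1 * (β + 1/2) * (1 + x) ^ (β + 1/2 - 1)) x :=
    ((hasDerivAt_id x).const_add 1).rpow_const (Or.inl h2.ne')
  have dR : HasDerivAt (RR α β) (2 * rho α β x * RR α β x) x := by
    refine (d1.mul d2).congr_deriv ?_
    rw [Real.rpow_sub_one h1.ne', Real.rpow_sub_one h2.ne']
    unfold rho RR
    field_simp
  have i1 : HasDerivAt (fun t : ℝ => 1 - t) (-1) x := (hasDerivAt_id x).const_sub 1
  have i2 : HasDerivAt (fun t : ℝ => 1 + t) 1 x := (hasDerivAt_id x).const_add 1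
  have drho : HasDerivAt (rho α β) (-((α + 1/2) / 2) / (1 - x) ^ 2 - ((β + 1/2) / 2) / (1 + x) ^ 2) x := by
    have a := (hasDerivAt_const x (-((α + 1/2) / 2))).div i1 h1.ne'
    have b := (hasDerivAt_const x ((β + 1/2) / 2)).div i2 h2.ne'
    refine (a.add b).congr_deriv ?_
    ring
  have i3 : HasDerivAt (fun t : ℝ => 1 - t ^ 2) (-(2 * x)) x := by
    have := (hasDerivAt_pow 2 x).const_sub 1
    simpa using this
  have dy := y.hasDerivAt x
  have dy' := (derivative y).hasDerivAt x
  have e := LL_eval α β _ y hy x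
  have h12 : 1 - x ^ 2 = (1 - x) * (1 + x) := by ring
  have ey : (derivative (derivative y)).eval x = - ((β - α - (α + β + 2) * x) * (derivative y).eval x
      + n * (n + α + β + 1) * y.eval x) / ((1 - x) * (1 + x)) := by
    rw [eq_div_iff (by positivity), ← h12]; linarith
  have dz : HasDerivAt (fun t => (derivative y).eval t + rho α β t * y.eval t)
      ((derivative (derivative y)).eval x + ((-((α + 1/2) / 2) / (1 - x) ^ 2 - ((β + 1/2) / 2) / (1 + x) ^ 2)
        * y.eval x + rho α β x * (derivative y).eval x)) x := dy'.add (drho.mul dy)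
  have dz2 : HasDerivAt (fun t => ((derivative y).eval t + rho α β t * y.eval t) ^ 2) _ x := dz.fun_pow 2
  have dy2 : HasDerivAt (fun t => (n + (α + β + 1) / 2)^2 * y.eval t ^ 2) _ x :=
    (dy.fun_pow 2).const_mul ((n + (α + β + 1) / 2)^2)
  have d4 := dR.fun_mul ((i3.fun_mul dz2).fun_add dy2)
  refine HasDerivAt.congr_deriv (f := FF α β (n + (α + β + 1) / 2) y) d4 ?_
  rw [ey]
  unfold rho DD
  generalize RR α β x = r
  generalize eval x y = u
  generalize eval x (derivative y) = v
  simp only [Nat.cast_ofNat, Nat.add_one_sub_one, pow_one]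
  have hx1 : x = 1 - (1 - x) := by ring
  have hx2 : 1 + x = 2 - (1 - x) := by ring
  rw [h12]
  field_simp
  ring

lemma FF_nonneg (α β N : ℝ) (y : ℝ[X]) (x : ℝ) (hx : x ∈ Ioo (-1 : ℝ) 1) : 0 ≤ FF α β N y x := by
  have := RR_pos α β x hx
  have h3 : 0 ≤ 1 - x^2 := by nlinarith [hx.1, hx.2]
  unfold FF; positivity

lemma FF_deriv_bd (α β N : ℝ) (hN : 0 < N) (y : ℝ[X]) (x : ℝ) (hx : x ∈ Ioo (-1 : ℝ) 1) :
    |RR α β x * (2 * ((derivative y).eval x + rho α β x * y.eval x) * y.eval x * DD α β x)|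
    ≤ ((|1/4 - α^2| + |1/4 - β^2|) / N) / (√(1 - x^2) * (1 - x^2)) * FF α β N y x := by
  have hR := RR_pos α β x hx
  have h1 : 0 < 1 - x := by linarith [hx.2]
  have h2 : 0 < 1 + x := by linarith [hx.1]
  have h3 : 0 < 1 - x^2 := by nlinarith
  have hD : |DD α β x| ≤ (|1/4 - α^2| + |1/4 - β^2|) / (1 - x^2) := by
    have e : DD α β x = (-((1/4 - α^2) * ((1 + x)/2)) - (1/4 - β^2) * ((1 - x)/2)) / (1 - x^2) := by
      unfold DD
      rw [show 1 - x^2 = (1 - x) * (1 + x) by ring]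
      field_simp
    rw [e, abs_div, abs_of_pos h3]
    gcongr
    refine (abs_sub _ _).trans ?_
    rw [abs_neg, abs_mul, abs_mul, abs_of_pos (show 0 < (1+x)/2 by linarith),
      abs_of_pos (show 0 < (1-x)/2 by linarith)]
    have := mul_le_mul_of_nonneg_left (show (1+x)/2 ≤ 1 by linarith) (abs_nonneg (1/4 - α^2))
    have := mul_le_mul_of_nonneg_left (show (1-x)/2 ≤ 1 by linarith) (abs_nonneg (1/4 - β^2))
    linarith
  set s := √(1 - x^2) with hs
  have hs0 : 0 < s := Real.sqrt_pos.mpr h3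
  have hs2 : s ^ 2 = 1 - x^2 := Real.sq_sqrt h3.le
  unfold FF
  set z := (derivative y).eval x + rho α β x * y.eval x
  set u := y.eval x
  have hzu : 2 * |z| * |u| ≤ ((1 - x^2) * z^2 + N^2 * u^2) / (N * s) := by
    rw [le_div_iff₀ (by positivity), ← hs2]
    nlinarith [sq_nonneg (s * |z| - N * |u|), sq_abs z, sq_abs u]
  rw [abs_mul, abs_of_pos hR, abs_mul, abs_mul, abs_mul, abs_two]
  calc RR α β x * (2 * |z| * |u| * |DD α β x|)
      ≤ RR α β x * ((((1 - x^2) * z^2 + N^2 * u^2) / (N * s)) * ((|1/4 - α^2| + |1/4 - β^2|) / (1 - x^2))) := by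
        gcongr
    _ = _ := by field_simp

lemma GG_deriv (x : ℝ) (hx : x ∈ Ioo (-1 : ℝ) 1) :
    HasDerivAt (fun t : ℝ => t / √(1 - t^2)) (1 / (√(1 - x^2) * (1 - x^2))) x := by
  have h3 : 0 < 1 - x^2 := by nlinarith [hx.1, hx.2]
  have i3 : HasDerivAt (fun t : ℝ => 1 - t ^ 2) (-(2 * x)) x := by
    have := (hasDerivAt_pow 2 x).const_sub 1
    simpa using this
  have hs0 : 0 < √(1 - x^2) := Real.sqrt_pos.mpr h3
  have hs2 : √(1 - x^2) ^ 2 = 1 - x^2 := Real.sq_sqrt h3.le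
  have := (hasDerivAt_id x).div (i3.sqrt h3.ne') hs0.ne'
  refine this.congr_deriv ?_
  simp only [id]
  rw [← hs2]
  generalize hq : √(1 - x^2) = s at *
  have hs3 : √(s^2) = s := Real.sqrt_sq hs0.le
  rw [hs3]
  field_simp
  linarith

lemma gron (F F' : ℝ → ℝ) (K : ℝ) (hF : ∀ x ∈ Ioo (-1:ℝ) 1, HasDerivAt F (F' x) x)
    (hb : ∀ x ∈ Ioo (-1:ℝ) 1, |F' x| ≤ K / (√(1 - x^2) * (1 - x^2)) * F x)
    (hpos : ∀ x ∈ Ioo (-1:ℝ) 1, 0 ≤ F x)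
    (T : ℝ) (x0 x : ℝ) (hx0 : x0 ∈ Ioo (-1:ℝ) 1) (hx : x ∈ Ioo (-1:ℝ) 1)
    (hT0 : |K * (x0 / √(1 - x0^2))| ≤ T) (hT : |K * (x / √(1 - x^2))| ≤ T) :
    F x ≤ F x0 * Real.exp (2 * T) := by
  have key : ∀ σ : ℝ, ∀ x ∈ Ioo (-1:ℝ) 1, HasDerivAt (fun t => F t * Real.exp (σ * (K * (t / √(1 - t^2)))))
      ((F' x + σ * (K / (√(1 - x^2) * (1 - x^2))) * F x) * Real.exp (σ * (K * (x / √(1 - x^2))))) x := by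
    intro σ x hx
    have := (hF x hx).mul (((GG_deriv x hx).const_mul K).const_mul σ).exp
    refine this.congr_deriv ?_
    ring
  have int : interior (Ioo (-1:ℝ) 1) = Ioo (-1:ℝ) 1 := isOpen_Ioo.interior_eq
  rw [abs_le] at hT hT0
  rcases le_total x0 x with h | h
  · have anti : AntitoneOn (fun t => F t * Real.exp (-1 * (K * (t / √(1 - t^2))))) (Ioo (-1:ℝ) 1) := by
      apply antitoneOn_of_hasDerivWithinAt_nonpos (convex_Ioo _ _)
      · intro x hx; exact (key (-1) x hx).continuousAt.continuousWithinAt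
      · intro x hx; rw [int] at hx; exact (key (-1) x hx).hasDerivWithinAt
      · intro x hx; rw [int] at hx
        have := (abs_le.mp (hb x hx)).2
        apply mul_nonpos_of_nonpos_of_nonneg _ (Real.exp_pos _).le
        linarith
    have := anti hx0 hx h
    simp only at this
    calc F x = (F x * Real.exp (-1 * (K * (x / √(1 - x^2))))) * Real.exp (K * (x / √(1 - x^2))) := by
          rw [mul_assoc, ← Real.exp_add]; simp
      _ ≤ (F x0 * Real.exp (-1 * (K * (x0 / √(1 - x0^2))))) * Real.exp (K * (x / √(1 - x^2))) := by gcongr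
      _ = F x0 * Real.exp (-1 * (K * (x0 / √(1 - x0^2))) + K * (x / √(1 - x^2))) := by
          rw [mul_assoc, ← Real.exp_add]
      _ ≤ _ := by
          apply mul_le_mul_of_nonneg_left _ (hpos x0 hx0)
          apply Real.exp_le_exp.mpr; linarith [hT.2, hT0.1]
  · have mono : MonotoneOn (fun t => F t * Real.exp (1 * (K * (t / √(1 - t^2))))) (Ioo (-1:ℝ) 1) := by
      apply monotoneOn_of_hasDerivWithinAt_nonneg (convex_Ioo _ _)
      · intro x hx; exact (key 1 x hx).continuousAt.continuousWithinAt
      · intro x hx; rw [int] at hx; exact (key 1 x hx).hasDerivWithinAt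
      · intro x hx; rw [int] at hx
        have := (abs_le.mp (hb x hx)).1
        apply mul_nonneg _ (Real.exp_pos _).le
        linarith
    have := mono hx hx0 h
    simp only at this
    calc F x = (F x * Real.exp (1 * (K * (x / √(1 - x^2))))) * Real.exp (-(K * (x / √(1 - x^2)))) := by
          rw [mul_assoc, ← Real.exp_add]; simp
      _ ≤ (F x0 * Real.exp (1 * (K * (x0 / √(1 - x0^2))))) * Real.exp (-(K * (x / √(1 - x^2)))) := by gcongr
      _ = F x0 * Real.exp (1 * (K * (x0 / √(1 - x0^2))) + -(K * (x / √(1 - x^2)))) := by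
          rw [mul_assoc, ← Real.exp_add]
      _ ≤ _ := by
          apply mul_le_mul_of_nonneg_left _ (hpos x0 hx0)
          apply Real.exp_le_exp.mpr; linarith [hT.1, hT0.2]

lemma wt_lb (α β : ℝ) : ∃ m : ℝ, 0 < m ∧ ∀ x ∈ Icc (-(1/2) : ℝ) (1/2), m ≤ wt α β x := by
  obtain ⟨x, hx, h⟩ := isCompact_Icc.exists_isMinOn (s := Icc (-(1/2) : ℝ) (1/2)) ⟨0, by norm_num⟩
    (f := wt α β) (by
      unfold wt
      apply ContinuousOn.mul
      · apply ContinuousOn.rpow_const (by fun_prop)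
        intro x hx; left; have := hx.2; linarith
      · apply ContinuousOn.rpow_const (by fun_prop)
        intro x hx; left; have := hx.1; linarith)
  refine ⟨wt α β x, ?_, fun z hz => h hz⟩
  have h1 : 0 < 1 - x := by linarith [hx.2]
  have h2 : 0 < 1 + x := by linarith [hx.1]
  unfold wt; positivity

lemma RR_ub (α β : ℝ) (hα : -(1/2 : ℝ) ≤ α) (hβ : -(1/2 : ℝ) ≤ β) (x : ℝ) (hx : x ∈ Icc (-1 : ℝ) 1) :
    RR α β x ≤ 2 ^ (α + 1/2) * 2 ^ (β + 1/2) := by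
  have h1 : 0 ≤ 1 - x := by linarith [hx.2]
  have h2 : 0 ≤ 1 + x := by linarith [hx.1]
  unfold RR
  have a1 : (1 - x) ^ (α + 1/2) ≤ 2 ^ (α + 1/2) :=
    Real.rpow_le_rpow h1 (by linarith [hx.1]) (by linarith)
  have a2 : (1 + x) ^ (β + 1/2) ≤ 2 ^ (β + 1/2) :=
    Real.rpow_le_rpow h2 (by linarith [hx.2]) (by linarith)
  gcongr

lemma mid_bd (α β : ℝ) (hα : -(1/2 : ℝ) ≤ α) (hβ : -(1/2 : ℝ) ≤ β) :
    ∃ C1 : ℝ, 0 < C1 ∧ ∀ (N lam : ℝ) (y : ℝ[X]) (x : ℝ), 1 ≤ N → 0 < lam → lam ≤ N ^ 2 →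
      x ∈ Icc (-(1/2) : ℝ) (1/2) → ((1 - x^2) * (derivative y).eval x ^ 2 + lam * y.eval x ^ 2)
      * wt α β x ≤ 2 * lam → FF α β N y x ≤ C1 * N ^ 2 := by
  obtain ⟨m, hm, hw⟩ := wt_lb α β
  set M : ℝ := 2 ^ (α + 1/2) * 2 ^ (β + 1/2) with hM
  set r : ℝ := (α + 1/2) + (β + 1/2) with hr
  have hM0 : 0 < M := by positivity
  refine ⟨M * ((8 + 4 * r ^ 2) / m), by positivity, ?_⟩
  intro N lam y x hN hlam hlN hx h
  have hwx := hw x hx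
  have h3 : 3/4 ≤ 1 - x^2 := by nlinarith [hx.1, hx.2]
  have h3' : 1 - x^2 ≤ 1 := by nlinarith
  set u := y.eval x
  set v := (derivative y).eval x
  have h4 : ((1 - x^2) * v ^ 2 + lam * u ^ 2) * m ≤ 2 * lam :=
    le_trans (mul_le_mul_of_nonneg_left hwx (by nlinarith [sq_nonneg u, sq_nonneg v])) h
  have hN2 : 1 ≤ N ^ 2 := by nlinarith
  have hu : u ^ 2 ≤ 2 / m := by
    rw [le_div_iff₀ hm]
    have : lam * (u ^ 2 * m) ≤ lam * 2 := by
      have : 0 ≤ (1 - x^2) * v^2 * m := by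
        have : 0 ≤ 1 - x^2 := by linarith
        positivity
      nlinarith
    exact le_of_mul_le_mul_left this hlam
  have hv : v ^ 2 ≤ 3 * N ^ 2 / m := by
    rw [le_div_iff₀ hm]
    have e1 : 3/4 * (v^2 * m) ≤ (1 - x^2) * (v^2 * m) := by gcongr
    have e2 : 0 ≤ lam * u^2 * m := by positivity
    nlinarith
  have hrho : rho α β x ^ 2 ≤ r ^ 2 := by
    have b1 : 0 ≤ ((α + 1/2) / 2) / (1 - x) := div_nonneg (by linarith) (by linarith [hx.2])
    have b2 : 0 ≤ ((β + 1/2) / 2) / (1 + x) := div_nonneg (by linarith) (by linarith [hx.1])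
    have b3 : ((α + 1/2) / 2) / (1 - x) ≤ α + 1/2 := by
      rw [div_le_iff₀ (by linarith [hx.2])]; nlinarith [hx.2]
    have b4 : ((β + 1/2) / 2) / (1 + x) ≤ β + 1/2 := by
      rw [div_le_iff₀ (by linarith [hx.1])]; nlinarith [hx.1]
    apply sq_le_sq'
    · unfold rho; rw [neg_div]; linarith
    · unfold rho; rw [neg_div]; linarith
  unfold FF
  have hRR := RR_ub α β hα hβ x ⟨by linarith [hx.1], by linarith [hx.2]⟩
  have hz : (v + rho α β x * u) ^ 2 ≤ 2 * (3 * N ^ 2 / m) + 2 * (r ^ 2 * (2 / m)) := by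
    have : rho α β x ^ 2 * u ^ 2 ≤ r ^ 2 * (2 / m) := by gcongr
    nlinarith [sq_nonneg (v - rho α β x * u)]
  calc RR α β x * ((1 - x^2) * (v + rho α β x * u)^2 + N^2 * u^2)
      ≤ M * (1 * (2 * (3 * N ^ 2 / m) + 2 * (r ^ 2 * (2 / m))) + N^2 * (2 / m)) := by
        gcongr
    _ ≤ M * (2 * (3 * N ^ 2 / m) + 2 * (r ^ 2 * (2 / m)) * N ^ 2 + N^2 * (2 / m)) := by
        have : 2 * (r ^ 2 * (2 / m)) * 1 ≤ 2 * (r ^ 2 * (2 / m)) * N^2 := by gcongr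
        gcongr
        linarith
    _ = _ := by field_simp; ring

lemma G_bd (n N A δ x : ℝ) (hn : 1 ≤ n) (hN : n ≤ N) (hA : 0 ≤ A) (hδ : 0 < δ)
    (h1 : δ / n ^ 2 ≤ 1 - x) (h2 : δ / n ^ 2 ≤ 1 + x) :
    |A / N * (x / √(1 - x^2))| ≤ A / √δ := by
  have hd : 0 < δ / n^2 := by positivity
  have h3 : δ / n ^ 2 ≤ 1 - x^2 := by
    rcases le_total 0 x with h | h <;> nlinarith
  have h4 : √δ / n ≤ √(1 - x^2) := by
    have : √δ / n = √(δ / n^2) := by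
      rw [Real.sqrt_div hδ.le, Real.sqrt_sq (by linarith)]
    rw [this]; exact Real.sqrt_le_sqrt h3
  have hsd : 0 < √δ := Real.sqrt_pos.mpr hδ
  have hx : |x| ≤ 1 := abs_le.mpr ⟨by linarith, by linarith⟩
  have hN0 : 0 < N := by linarith
  rw [abs_mul, abs_div, abs_div, abs_of_nonneg hA, abs_of_pos hN0, abs_of_nonneg (Real.sqrt_nonneg _)]
  calc A / N * (|x| / √(1 - x^2)) ≤ A / n * (1 / (√δ / n)) := by gcongr
    _ = A / √δ := by field_simp

lemma interior_bd (α β δ : ℝ) (hα : -(1/2 : ℝ) ≤ α) (hβ : -(1/2 : ℝ) ≤ β) (hδ : 0 < δ) (hδ2 : δ ≤ 1/2) :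
    ∃ C2 : ℝ, 0 < C2 ∧ ∀ (n : ℝ) (y : ℝ[X]), 1 ≤ n →
      LL α β y + C (n * (n + α + β + 1)) * y = 0 → Phi α β (y * y) = 1 →
      ∀ x : ℝ, δ / n ^ 2 ≤ 1 - x → δ / n ^ 2 ≤ 1 + x → RR α β x * y.eval x ^ 2 ≤ C2 := by
  obtain ⟨C1, hC1, hmb⟩ := mid_bd α β hα hβ
  set A : ℝ := |1/4 - α^2| + |1/4 - β^2| with hA
  have hA0 : 0 ≤ A := by positivity
  refine ⟨C1 * Real.exp (2 * (A / √δ)), by positivity, ?_⟩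
  intro n y hn hy h1 x hx1 hx2
  set N := n + (α + β + 1) / 2 with hN
  have hnN : n ≤ N := by linarith
  have hlam : 0 < n * (n + α + β + 1) := by
    apply mul_pos <;> linarith
  obtain ⟨x0, hx0, hmid⟩ := mid α β hα hβ y _ hy h1
  have hF0 := hmb N _ y x0 (by linarith) hlam (by rw [hN]; nlinarith [sq_nonneg (α + β + 1)]) hx0 hmid
  have hd : 0 < δ / n^2 := by positivity
  have hd2 : δ / n^2 ≤ 1/2 := by
    rw [div_le_iff₀ (by positivity)]; nlinarith
  have hxI : x ∈ Ioo (-1 : ℝ) 1 := ⟨by linarith, by linarith⟩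
  have hx0I : x0 ∈ Ioo (-1 : ℝ) 1 := ⟨by linarith [hx0.1], by linarith [hx0.2]⟩
  have hg := gron (FF α β N y) _ (A / N) (fun x hx => FF_deriv α β n y hy x hx)
    (fun x hx => FF_deriv_bd α β N (by linarith) y x hx) (fun x hx => FF_nonneg α β N y x hx)
    (A / √δ) x0 x hx0I hxI
    (G_bd n N A δ x0 hn hnN hA0 hδ (by linarith [hx0.2]) (by linarith [hx0.1]))
    (G_bd n N A δ x hn hnN hA0 hδ hx1 hx2)
  have hR := RR_pos α β x hxI
  have hlow : N ^ 2 * (RR α β x * y.eval x ^ 2) ≤ FF α β N y x := by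
    unfold FF
    have h3 : 0 ≤ 1 - x^2 := by nlinarith [hxI.1, hxI.2]
    have : 0 ≤ RR α β x * ((1 - x ^ 2) * ((derivative y).eval x + rho α β x * y.eval x) ^ 2) := by positivity
    nlinarith
  have hN0 : 0 < N ^ 2 := by
    have : 0 < N := by linarith
    positivity
  apply le_of_mul_le_mul_left _ hN0
  calc _ ≤ _ := hlow
    _ ≤ _ := hg
    _ ≤ (C1 * N^2) * Real.exp (2 * (A / √δ)) := by gcongr
    _ = _ := by ring

noncomputable def HH (α β e : ℝ) (y : ℝ[X]) (x : ℝ) : ℝ :=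
  (1 - x + e) ^ ((α + 1/2) / 2) * (1 + x + e) ^ ((β + 1/2) / 2) * |y.eval x|

lemma HH_refl (α β e : ℝ) (y : ℝ[X]) (x : ℝ) : HH β α e (y.comp (-X)) (-x) = HH α β e y x := by
  unfold HH
  rw [eval_comp, eval_neg, eval_X, neg_neg, sub_neg_eq_add, ← sub_eq_add_neg]
  ring

lemma LL_refl (α β lam : ℝ) (y : ℝ[X]) (hy : LL α β y + C lam * y = 0) :
    LL β α (y.comp (-X)) + C lam * y.comp (-X) = 0 := by
  apply Polynomial.funext
  intro x
  have := LL_eval α β lam y hy (-x)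
  simp [LL, derivative_comp]
  linarith

lemma HH_int (α β δ e C2 : ℝ) (hα : -(1/2 : ℝ) ≤ α) (hβ : -(1/2 : ℝ) ≤ β) (hδ : 0 < δ) (he : 0 < e)
    (y : ℝ[X]) (x : ℝ) (h1 : δ * e ≤ 1 - x) (h2 : δ * e ≤ 1 + x)
    (h : RR α β x * y.eval x ^ 2 ≤ C2) :
    HH α β e y x ≤ √((1 + 1/δ) ^ (α + 1/2) * (1 + 1/δ) ^ (β + 1/2) * C2) := by
  apply Real.le_sqrt_of_sq_le
  have hde : 0 < δ * e := by positivity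
  have k1 : 1 - x + e ≤ (1 + 1/δ) * (1 - x) := by
    have : e ≤ 1/δ * (1 - x) := by
      rw [one_div, inv_mul_eq_div, le_div_iff₀ hδ]; linarith
    linarith
  have k2 : 1 + x + e ≤ (1 + 1/δ) * (1 + x) := by
    have : e ≤ 1/δ * (1 + x) := by
      rw [one_div, inv_mul_eq_div, le_div_iff₀ hδ]; linarith
    linarith
  have p1 : 0 < 1 - x + e := by linarith
  have p2 : 0 < 1 + x + e := by linarith
  unfold HH
  rw [mul_pow, mul_pow, sq_abs, ← Real.rpow_natCast, ← Real.rpow_natCast, ← Real.rpow_mul p1.le, ← Real.rpow_mul p2.le]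
  have r1 : (1 - x + e) ^ ((α + 1/2) / 2 * ((2:ℕ) : ℝ)) ≤ (1 + 1/δ) ^ (α + 1/2) * (1 - x) ^ (α + 1/2) := by
    rw [← Real.mul_rpow (by positivity) (by linarith)]
    push_cast
    rw [div_mul_cancel₀ _ (by norm_num)]
    exact Real.rpow_le_rpow p1.le k1 (by linarith)
  have r2 : (1 + x + e) ^ ((β + 1/2) / 2 * ((2:ℕ) : ℝ)) ≤ (1 + 1/δ) ^ (β + 1/2) * (1 + x) ^ (β + 1/2) := by
    rw [← Real.mul_rpow (by positivity) (by linarith)]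
    push_cast
    rw [div_mul_cancel₀ _ (by norm_num)]
    exact Real.rpow_le_rpow p2.le k2 (by linarith)
  have q1 : 0 < 1 - x := by linarith
  have q2 : 0 < 1 + x := by linarith
  calc _ ≤ ((1 + 1/δ) ^ (α + 1/2) * (1 - x) ^ (α + 1/2)) * ((1 + 1/δ) ^ (β + 1/2) * (1 + x) ^ (β + 1/2)) * y.eval x ^ 2 := by
        gcongr
    _ = (1 + 1/δ) ^ (α + 1/2) * (1 + 1/δ) ^ (β + 1/2) * (RR α β x * y.eval x ^ 2) := by unfold RR; ring
    _ ≤ _ := by gcongr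

lemma HH_edge (α β δ n : ℝ) (hα : -(1/2 : ℝ) ≤ α) (hβ : -(1/2 : ℝ) ≤ β) (hδ : 0 < δ)
    (hδ2 : δ ≤ 1/2) (hδ3 : (α + β + 2) * δ ≤ 1/4) (hn : 1 ≤ n) (y : ℝ[X])
    (hy : LL α β y + C (n * (n + α + β + 1)) * y = 0) (x : ℝ) (hx : 1 - δ * n⁻¹ ^ 2 ≤ x) (hx1 : x ≤ 1) :
    HH α β (n⁻¹ ^ 2) y x ≤ 2 * 3 ^ ((β + 1/2) / 2) * HH α β (n⁻¹ ^ 2) y (1 - δ * n⁻¹ ^ 2) := by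
  set e := n⁻¹ ^ 2 with he
  have he0 : 0 < e := by positivity
  have he1 : e ≤ 1 := by
    rw [he]; exact pow_le_one₀ (by positivity) (inv_le_one_of_one_le₀ hn)
  have hde : 0 < δ * e := by positivity
  have hde2 : δ * e ≤ 1/2 := by nlinarith
  set x1 := 1 - δ * e with hx1d
  have hne : n * (n + α + β + 1) * e ≤ α + β + 2 := by
    have : n * (n + α + β + 1) * e = 1 + (α + β + 1) * n⁻¹ := by
      rw [he]; field_simp; ring
    have h2 : n⁻¹ ≤ 1 := inv_le_one_of_one_le₀ hn
    rw [this]; nlinarith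
  have hyx := edge α β (n * (n + α + β + 1)) x1 hα hβ (by apply mul_nonneg <;> linarith) y hy
    (by linarith) (by linarith) (by
      rw [hx1d]; ring_nf; nlinarith) (by
      rw [hx1d]
      have : n * (n + α + β + 1) * (1 - (1 - δ * e)) = (n * (n + α + β + 1) * e) * δ := by ring
      rw [this]; nlinarith) x ⟨hx, hx1⟩
  unfold HH
  have r1 : (1 - x + e) ^ ((α + 1/2) / 2) ≤ (1 - x1 + e) ^ ((α + 1/2) / 2) :=
    Real.rpow_le_rpow (by linarith) (by linarith) (by linarith)
  have r2 : (1 + x + e) ^ ((β + 1/2) / 2) ≤ 3 ^ ((β + 1/2) / 2) * (1 + x1 + e) ^ ((β + 1/2) / 2) := by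
    rw [← Real.mul_rpow (by norm_num) (by linarith)]
    exact Real.rpow_le_rpow (by linarith) (by linarith) (by linarith)
  have p1 : 0 < 1 - x1 + e := by linarith
  have p2 : 0 < 1 + x1 + e := by linarith
  have p3 : 0 < 1 - x + e := by linarith
  have p4 : 0 < 1 + x + e := by linarith
  calc _ ≤ (1 - x1 + e) ^ ((α + 1/2) / 2) * (3 ^ ((β + 1/2) / 2) * (1 + x1 + e) ^ ((β + 1/2) / 2)) * (2 * |y.eval x1|) := by
        gcongr
    _ = _ := by ring

lemma final (α β : ℝ) (hα : -(1/2 : ℝ) ≤ α) (hβ : -(1/2 : ℝ) ≤ β) :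
    ∃ c : ℝ, 0 < c ∧ ∀ (n : ℝ) (y : ℝ[X]), 1 ≤ n →
      LL α β y + C (n * (n + α + β + 1)) * y = 0 → Phi α β (y * y) = 1 →
      ∀ x ∈ Icc (-1 : ℝ) 1, HH α β (n⁻¹ ^ 2) y x ≤ c := by
  have hs : 1 ≤ α + β + 2 := by linarith
  set δ : ℝ := 1 / (4 * (α + β + 2)) with hδd
  have hδ : 0 < δ := by positivity
  have hδ3 : (α + β + 2) * δ ≤ 1/4 := by rw [hδd]; apply le_of_eq; field_simp
  have hδ2 : δ ≤ 1/2 := by nlinarith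
  obtain ⟨C2, hC2, hint⟩ := interior_bd α β δ hα hβ hδ hδ2
  set c0 := √((1 + 1/δ) ^ (α + 1/2) * (1 + 1/δ) ^ (β + 1/2) * C2) with hc0
  have hc0p : 0 < c0 := by apply Real.sqrt_pos.mpr; positivity
  set ca : ℝ := 2 * 3 ^ ((α + 1/2) / 2) with hca
  set cb : ℝ := 2 * 3 ^ ((β + 1/2) / 2) with hcb
  have hcap : 0 < ca := by positivity
  have hcbp : 0 < cb := by positivity
  refine ⟨(1 + ca + cb) * c0, by positivity, ?_⟩
  intro n y hn hy h1 x hx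
  have hmain : ∀ x, δ * n⁻¹ ^ 2 ≤ 1 - x → δ * n⁻¹ ^ 2 ≤ 1 + x → HH α β (n⁻¹ ^ 2) y x ≤ c0 := by
    intro x h3 h4
    apply HH_int α β δ _ C2 hα hβ hδ (by positivity) y x h3 h4
    apply hint n y hn hy h1 x
    · rw [div_eq_mul_inv, ← inv_pow]; exact h3
    · rw [div_eq_mul_inv, ← inv_pow]; exact h4
  have he0 : 0 < n⁻¹ ^ 2 := by positivity
  have he1 : n⁻¹ ^ 2 ≤ 1 := pow_le_one₀ (by positivity) (inv_le_one_of_one_le₀ hn)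
  have hde2 : δ * n⁻¹ ^ 2 ≤ 1/2 := by nlinarith
  by_cases h3 : δ * n⁻¹ ^ 2 ≤ 1 - x
  · by_cases h4 : δ * n⁻¹ ^ 2 ≤ 1 + x
    · have := hmain x h3 h4
      nlinarith [mul_pos hcap hc0p, mul_pos hcbp hc0p]
    · have hr := HH_edge β α δ n hβ hα hδ hδ2 (by linarith) hn (y.comp (-X)) (by
        have := LL_refl α β _ y hy
        rwa [show n * (n + α + β + 1) = n * (n + β + α + 1) by ring] at this) (-x) (by linarith) (by linarith [hx.1])
      have hh := HH_refl α β (n⁻¹ ^ 2) y (-(1 - δ * n⁻¹ ^ 2))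
      rw [neg_neg] at hh
      rw [HH_refl, hh] at hr
      have := mul_le_mul_of_nonneg_left (hmain (-(1 - δ * n⁻¹ ^ 2)) (by linarith) (by linarith)) hcap.le
      nlinarith [mul_pos hcap hc0p, mul_pos hcbp hc0p]
  · have hr := HH_edge α β δ n hα hβ hδ hδ2 hδ3 hn y hy x (by linarith) hx.2
    have := mul_le_mul_of_nonneg_left (hmain (1 - δ * n⁻¹ ^ 2) (by linarith) (by linarith)) hcbp.le
    nlinarith [mul_pos hcap hc0p, mul_pos hcbp hc0p]

end Jac

/-- Bound for the `L²`-normalized Jacobi polynomials: for `α, β ≥ -1/2` there is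
`c = c(α,β)` such that `|P̃_n^{(α,β)}(x)| ≤ c · w_{α,β}(n;x)^{-1/2}` where
`w_{α,β}(n;x) = (1-x+n^{-2})^{α+1/2}(1+x+n^{-2})^{β+1/2}`. -/
theorem stmt13 (α β : ℝ) (hα : -(1/2 : ℝ) ≤ α) (hβ : -(1/2 : ℝ) ≤ β) :
    ∃ c : ℝ, 0 < c ∧ ∀ P : ℕ → Polynomial ℝ,
      (∀ n : ℕ, (P n).natDegree = n) →
      (∀ n m : ℕ,
        (∫ t in Icc (-1 : ℝ) 1,
          (P n).eval t * (P m).eval t * (1 - t) ^ α * (1 + t) ^ β) =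
          if n = m then 1 else 0) →
      ∀ n : ℕ, 1 ≤ n → ∀ x ∈ Icc (-1 : ℝ) 1,
        |(P n).eval x| ≤
          c * (1 - x + ((n : ℝ))⁻¹ ^ 2) ^ (-((α + 1/2) / 2)) *
              (1 + x + ((n : ℝ))⁻¹ ^ 2) ^ (-((β + 1/2) / 2)) := by
  obtain ⟨c, hc, h⟩ := Jac.final α β hα hβ
  refine ⟨c, hc, ?_⟩
  intro P hd ho n hn x hx
  have ho' : ∀ n m, Jac.Phi α β (P n * P m) = if n = m then 1 else 0 := by
    intro n m
    rw [← ho n m, Jac.Phi, intervalIntegral.integral_of_le (by norm_num), integral_Icc_eq_integral_Ioc]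
    congr 1; ext t; simp [Jac.wt]; ring
  have hn' : (1 : ℝ) ≤ n := by exact_mod_cast hn
  have hode := Jac.ode α β hα hβ P hd ho' n
  have := h n (P n) hn' hode (by simpa using ho' n n) x hx
  unfold Jac.HH at this
  have he0 : 0 < (n : ℝ)⁻¹ ^ 2 := by positivity
  have p1 : 0 < 1 - x + (n : ℝ)⁻¹ ^ 2 := by linarith [hx.2]
  have p2 : 0 < 1 + x + (n : ℝ)⁻¹ ^ 2 := by linarith [hx.1]
  rw [Real.rpow_neg p1.le, Real.rpow_neg p2.le, mul_assoc, ← mul_inv, ← div_eq_mul_inv,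
    le_div_iff₀ (by positivity)]
  linarith
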